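/- Let Λ be a lattice in ℂ, let a ∈ ℂ with aΛ ⊆ Λ and a ≠ 1, and let b ∈ ℂ. Then the set of fixed points on the torus of the induced affine map, namely {x ∈ ℂ/Λ : a·x + [b] = x} where [b] is the class of b, is finite with exactly |a−1|² = Complex.normSq (a−1) elements. -/

import Mathlib

/-- Multiplication by `a` on the torus `ℂ/Λ`, induced when `aΛ ⊆ Λ`. -/
noncomputable def torusMul (Λ : AddSubgroup ℂ) (a : ℂ) (h : ∀ x ∈ Λ, a * x ∈ Λ) :
    ℂ ⧸ Λ →+ ℂ ⧸ Λ :=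
  QuotientAddGroup.map Λ Λ (AddMonoidHom.mulLeft a) h

open Module in
/-- Multiplication by `c ≠ 0` on a lattice: the cokernel has `|c|²` elements. -/
theorem lattice_card_quotient (Λ : AddSubgroup ℂ) (v w : ℂ)
    (hindep : LinearIndependent ℝ ![v, w])
    (hΛ : Λ = AddSubgroup.closure {v, w})
    (c : ℂ) (hc : c ≠ 0) (f : Λ.toIntSubmodule →ₗ[ℤ] Λ.toIntSubmodule)
    (hf : ∀ x, (f x : ℂ) = c * x) :
    (Nat.card (Λ.toIntSubmodule ⧸ LinearMap.range f) : ℝ) = Complex.normSq c := by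
  let B : Basis (Fin 2) ℝ ℂ := basisOfLinearIndependentOfCardEqFinrank hindep (by simp)
  have hB : (B : Fin 2 → ℂ) = ![v, w] := by simp [B]
  have hcl : Λ = AddSubgroup.closure (Set.range B) := by
    rw [hΛ, hB]; simp [Set.pair_comm]
  let bL := B.addSubgroupOfClosure Λ hcl
  have hinj : Function.Injective f := by
    intro x y hxy
    have h := congrArg (Subtype.val) hxy
    rw [hf, hf] at h
    exact Subtype.ext (mul_left_cancel₀ hc h)
  have : Module.Free ℤ Λ.toIntSubmodule := Module.Free.of_basis bL
  have : Module.Finite ℤ Λ.toIntSubmodule := Module.Finite.of_basis bL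
  have h1 := Submodule.natAbs_det_equiv (LinearMap.range f) (LinearEquiv.ofInjective f hinj)
  have h2 : ((LinearMap.range f).subtype ∘ₗ AddMonoidHom.toIntLinearMap
      ((LinearEquiv.ofInjective f hinj : _ ≃ₗ[ℤ] _) : Λ.toIntSubmodule →+ LinearMap.range f)) = f := by
    ext x; rfl
  rw [h2] at h1
  have h3 : ((LinearMap.det f : ℤ) : ℝ) = Complex.normSq c := by
    rw [← Algebra.norm_complex_apply, Algebra.norm_eq_matrix_det B, ← LinearMap.det_toMatrix bL]
    change algebraMap ℤ ℝ _ = _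
    rw [RingHom.map_det]
    congr 1
    ext i j
    rw [Algebra.leftMulMatrix_eq_repr_mul, RingHom.mapMatrix_apply, Matrix.map_apply,
      LinearMap.toMatrix_apply]
    have h4 := B.addSubgroupOfClosure_repr_apply Λ hcl (f (bL j)) i
    rw [hf, B.addSubgroupOfClosure_apply] at h4
    exact h4
  rw [← h1, Nat.cast_natAbs, Int.cast_abs, h3, abs_of_nonneg (Complex.normSq_nonneg c)]

/-- if `Λ = ℤv + ℤw` is a lattice in `ℂ`, `aΛ ⊆ Λ`, `a ≠ 1`, and `b ∈ ℂ`,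
then the fixed-point set `{x ∈ ℂ/Λ : a·x + [b] = x}` of the induced affine map of the
torus is finite with exactly `|a−1|² = Complex.normSq (a−1)` elements. -/
theorem card_affine_torus_fixed_points (Λ : AddSubgroup ℂ) (v w : ℂ)
    (hindep : LinearIndependent ℝ ![v, w])
    (hΛ : Λ = AddSubgroup.closure {v, w})
    (a : ℂ) (haΛ : ∀ x ∈ Λ, a * x ∈ Λ) (ha1 : a ≠ 1) (b : ℂ) :
    {x : ℂ ⧸ Λ | torusMul Λ a haΛ x + (QuotientAddGroup.mk b : ℂ ⧸ Λ) = x}.Finite ∧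
      (Nat.card {x : ℂ ⧸ Λ | torusMul Λ a haΛ x + (QuotientAddGroup.mk b : ℂ ⧸ Λ) = x} : ℝ) =
        Complex.normSq (a - 1) := by
  classical
  have hc : a - 1 ≠ 0 := sub_ne_zero.mpr ha1
  have hcΛ : ∀ x ∈ Λ, (a - 1) * x ∈ Λ := fun x hx => by
    rw [sub_mul, one_mul]; exact Λ.sub_mem (haΛ x hx) hx
  let f : Λ.toIntSubmodule →ₗ[ℤ] Λ.toIntSubmodule :=
    (((AddMonoidHom.mulLeft (a - 1)).comp Λ.subtype).codRestrict Λ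
      (fun x => hcΛ x x.2)).toIntLinearMap
  have hf : ∀ x, (f x : ℂ) = (a - 1) * x := fun x => rfl
  have hcard := lattice_card_quotient Λ v w hindep hΛ (a - 1) hc f hf
  set S := {x : ℂ ⧸ Λ | torusMul Λ a haΛ x + (QuotientAddGroup.mk b : ℂ ⧸ Λ) = x} with hS
  have hmem : ∀ t : ℂ, (QuotientAddGroup.mk t : ℂ ⧸ Λ) ∈ S ↔ (a - 1) * t + b ∈ Λ := by
    intro t
    change (QuotientAddGroup.mk (a * t + b) : ℂ ⧸ Λ) = QuotientAddGroup.mk t ↔ _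
    rw [QuotientAddGroup.eq_iff_sub_mem]
    have : a * t + b - t = (a - 1) * t + b := by ring
    rw [this]
  let F : (Λ.toIntSubmodule ⧸ LinearMap.range f) → S := fun q =>
    ⟨QuotientAddGroup.mk (((q.out : Λ.toIntSubmodule) - b) / (a - 1)), by
      rw [hmem, mul_div_cancel₀ _ hc, sub_add_cancel]
      exact q.out.2⟩
  have hF : Function.Bijective F := by
    constructor
    · intro q r hqr
      have h := congrArg Subtype.val hqr
      change (QuotientAddGroup.mk _ : ℂ ⧸ Λ) = QuotientAddGroup.mk _ at h
      rw [QuotientAddGroup.eq_iff_sub_mem] at h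
      rw [← Submodule.Quotient.mk_out q, ← Submodule.Quotient.mk_out r, Submodule.Quotient.eq]
      refine ⟨⟨_, h⟩, Subtype.ext ?_⟩
      rw [hf]
      push_cast
      field_simp
      ring
    · rintro ⟨x, hx⟩
      obtain ⟨t, rfl⟩ := QuotientAddGroup.mk_surjective x
      have ht := (hmem t).1 hx
      let l : Λ.toIntSubmodule := ⟨_, ht⟩
      refine ⟨Submodule.Quotient.mk l, Subtype.ext ?_⟩
      change (QuotientAddGroup.mk _ : ℂ ⧸ Λ) = QuotientAddGroup.mk _
      rw [QuotientAddGroup.eq_iff_sub_mem]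
      have h := Submodule.Quotient.mk_out
        (Submodule.Quotient.mk l : Λ.toIntSubmodule ⧸ LinearMap.range f)
      rw [Submodule.Quotient.eq] at h
      obtain ⟨y, hy⟩ := h
      have hy' := congrArg Subtype.val hy
      rw [hf] at hy'
      push_cast at hy'
      have hl : (l : ℂ) = (a - 1) * t + b := rfl
      rw [hl] at hy'
      have hyt : (((Submodule.Quotient.mk l :
          Λ.toIntSubmodule ⧸ LinearMap.range f).out : Λ.toIntSubmodule) - b) / (a - 1) - t
          = (y : ℂ) := by
        field_simp
        linear_combination -hy'
      rw [hyt]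
      exact y.2
  have hcS : Nat.card S = Nat.card (Λ.toIntSubmodule ⧸ LinearMap.range f) :=
    (Nat.card_congr (Equiv.ofBijective F hF)).symm
  rw [← hcS] at hcard
  refine ⟨?_, hcard⟩
  have hpos : Nat.card S ≠ 0 := by
    intro h0
    rw [h0, Nat.cast_zero] at hcard
    exact hc (Complex.normSq_eq_zero.mp hcard.symm)
  exact Set.finite_coe_iff.mp (Nat.finite_of_card_ne_zero hpos)
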